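/- For every natural number k ≥ 1, the positive integer lcm(1, 2, …, k−1) is a period of the sequence n ↦ C(n, k) / [n, k]; that is, for all n ≥ k, C(n + lcm(1, …, k−1), k) / [n + lcm(1, …, k−1), k] = C(n, k) / [n, k]. -/

import Mathlib

/-- `rangeLcm a b` is `lcm(a, a+1, …, b)`, with the convention that the
lcm of an empty range equals `1`. -/
def rangeLcm (a b : ℕ) : ℕ := (Finset.Icc a b).lcm id

/-- The lcm-binomial number `[n, k] = lcm(n, n-1, …, n-k+1) / lcm(1, 2, …, k)`. -/
def lcmBinom (n k : ℕ) : ℕ := rangeLcm (n - k + 1) n / rangeLcm 1 k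

/-!
The ratio of the product of a finite family to its lcm depends only on the pairwise gcds: adjoining
`x` to a family with lcm `m` multiplies the ratio by `gcd x m`, which by distributivity is the lcm
of the gcds of `x` with the members of the family. Translating `n - k + 1, …, n` by a common
multiple of `1, …, k - 1` preserves all pairwise gcds, since `gcd i j = gcd i (j - i)` and
`j - i` divides the translation. Finally `C(n, k) / [n, k]` is the ratio for this interval times
`lcm(1, …, k) / k!`.
-/

open scoped Nat

section GCDMonoid

variable {α ι : Type*} [CommMonoidWithZero α]

theorem dvd_lcm_gcd_gcd [GCDMonoid α] {d x y z : α} (hx : d ∣ x) (hyz : d ∣ lcm y z) :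
    d ∣ lcm (gcd x y) (gcd x z) := by
  -- Since `e * lcm (gcd x y) (gcd x z)` is `gcd x y * gcd x z` up to a unit, it is enough that
  -- `d * e` divides the latter.
  set e := gcd (gcd x y) (gcd x z)
  have he_left : e ∣ gcd x y := gcd_dvd_left _ _
  have he_right : e ∣ gcd x z := gcd_dvd_right _ _
  have he_y : e ∣ y := he_left.trans (gcd_dvd_right _ _)
  have he_z : e ∣ z := he_right.trans (gcd_dvd_right _ _)
  have h_yz : d * e ∣ z * y :=
    calc d * e ∣ lcm y z * gcd y z := mul_dvd_mul hyz (dvd_gcd he_y he_z)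
      _ = gcd y z * lcm y z := mul_comm _ _
      _ ∣ y * z := (gcd_mul_lcm y z).dvd
      _ = z * y := mul_comm _ _
  have h_y : d * e ∣ y * gcd x z := by
    rw [mul_comm y]
    exact (dvd_gcd (mul_dvd_mul hx he_y) h_yz).trans (gcd_mul_right' y x z).dvd
  have h_mul : d * e ∣ gcd x y * gcd x z :=
    (dvd_gcd (mul_dvd_mul hx he_right) h_y).trans (gcd_mul_right' (gcd x z) x y).dvd
  rcases eq_or_ne e 0 with he₀ | he₀
  · have hxy : gcd x y = 0 := ((gcd_eq_zero_iff _ _).1 he₀).1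
    rw [hxy, lcm_zero_left]
    exact dvd_zero d
  · refine (mul_dvd_mul_iff_left he₀).1 ?_
    rw [mul_comm e d]
    exact h_mul.trans (gcd_mul_lcm _ _).symm.dvd

variable [NormalizedGCDMonoid α]

theorem gcd_lcm_distrib_left (x y z : α) :
    gcd x (lcm y z) = lcm (gcd x y) (gcd x z) := by
  refine dvd_antisymm_of_normalize_eq (normalize_gcd _ _) (normalize_lcm _ _) ?_ ?_
  · exact dvd_lcm_gcd_gcd (gcd_dvd_left _ _) (gcd_dvd_right _ _)
  · exact dvd_gcd (lcm_dvd (gcd_dvd_left _ _) (gcd_dvd_left _ _))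
      (lcm_dvd_lcm (gcd_dvd_right _ _) (gcd_dvd_right _ _))

theorem gcd_finset_lcm (x : α) (s : Finset ι) (f : ι → α) :
    gcd x (s.lcm f) = s.lcm fun i ↦ gcd x (f i) := by
  classical
  induction s using Finset.induction_on with
  | empty => simp only [Finset.lcm_empty, gcd_one_right]
  | insert a s _ ih => rw [Finset.lcm_insert, Finset.lcm_insert, gcd_lcm_distrib_left, ih]

theorem associated_prod_mul_lcm_of_pairwise_gcd_eq {s : Finset ι} {f g : ι → α}
    (h : (s : Set ι).Pairwise fun i j ↦ gcd (f i) (f j) = gcd (g i) (g j)) :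
    Associated ((∏ i ∈ s, f i) * s.lcm g) ((∏ i ∈ s, g i) * s.lcm f) := by
  classical
  induction s using Finset.induction_on with
  | empty => rfl
  | insert a s ha ih =>
    have hs : Associated ((∏ i ∈ s, f i) * s.lcm g) ((∏ i ∈ s, g i) * s.lcm f) :=
      ih (h.mono (by simp only [Finset.coe_insert, Set.subset_insert]))
    have h_gcd : gcd (f a) (s.lcm f) = gcd (g a) (s.lcm g) := by
      rw [gcd_finset_lcm, gcd_finset_lcm]
      refine Finset.lcm_congr rfl fun i hi ↦ h (Finset.mem_insert_self a s)
        (Finset.mem_insert_of_mem hi) ?_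
      rintro rfl
      exact ha hi
    rw [Finset.prod_insert ha, Finset.prod_insert ha, Finset.lcm_insert, Finset.lcm_insert]
    rcases eq_or_ne (gcd (f a) (s.lcm f)) 0 with h₀ | h₀
    · have hf : f a = 0 := ((gcd_eq_zero_iff _ _).1 h₀).1
      have hg : g a = 0 := ((gcd_eq_zero_iff _ _).1 (h_gcd ▸ h₀)).1
      simp only [hf, hg, zero_mul, Associated.refl]
    · refine Associated.of_mul_left ?_ (Associated.refl (gcd (f a) (s.lcm f))) h₀
      calc gcd (f a) (s.lcm f) * (f a * (∏ i ∈ s, f i) * lcm (g a) (s.lcm g))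
        _ = f a * (∏ i ∈ s, f i) * (gcd (g a) (s.lcm g) * lcm (g a) (s.lcm g)) := by
          rw [h_gcd, mul_left_comm]
        Associated _ (f a * (∏ i ∈ s, f i) * (g a * s.lcm g)) := (gcd_mul_lcm _ _).mul_left _
        _ = f a * g a * ((∏ i ∈ s, f i) * s.lcm g) := mul_mul_mul_comm _ _ _ _
        Associated _ (f a * g a * ((∏ i ∈ s, g i) * s.lcm f)) := hs.mul_left _
        _ = g a * (∏ i ∈ s, g i) * (f a * s.lcm f) := by rw [mul_comm (f a), mul_mul_mul_comm]
        Associated _ (g a * (∏ i ∈ s, g i) * (gcd (f a) (s.lcm f) * lcm (f a) (s.lcm f))) :=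
          (gcd_mul_lcm _ _).symm.mul_left _
        _ = gcd (f a) (s.lcm f) * (g a * (∏ i ∈ s, g i) * lcm (f a) (s.lcm f)) :=
          mul_left_comm _ _ _

end GCDMonoid

theorem gcd_add_add_right_of_sub_dvd {i j c : ℕ} (hij : i ≤ j) (h : j - i ∣ c) :
    Nat.gcd (i + c) (j + c) = Nat.gcd i j := by
  obtain ⟨d, rfl⟩ := Nat.exists_eq_add_of_le hij
  rw [Nat.add_sub_cancel_left] at h
  obtain ⟨q, rfl⟩ := h
  calc Nat.gcd (i + d * q) (i + d + d * q)
    _ = Nat.gcd (i + d * q) d := by rw [add_right_comm, Nat.gcd_self_add_right]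
    _ = Nat.gcd i d := Nat.gcd_add_mul_left_left _ _ _
    _ = Nat.gcd i (i + d) := (Nat.gcd_self_add_right _ _).symm

theorem dvd_rangeLcm {a b i : ℕ} (ha : a ≤ i) (hb : i ≤ b) : i ∣ rangeLcm a b :=
  Finset.dvd_lcm (f := id) (Finset.mem_Icc.2 ⟨ha, hb⟩)

theorem rangeLcm_pos {a b : ℕ} (ha : 0 < a) : 0 < rangeLcm a b :=
  Nat.pos_of_ne_zero <| Finset.lcm_ne_zero_iff.2 fun _ hi ↦
    (ha.trans_le (Finset.mem_Icc.1 hi).1).ne'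

theorem rangeLcm_add_add (a b c : ℕ) :
    rangeLcm (a + c) (b + c) = (Finset.Icc a b).lcm (· + c) := by
  rw [rangeLcm, ← Finset.image_add_right_Icc, Finset.lcm_image, Function.id_comp]

theorem pairwise_gcd_add_eq_gcd {a b c : ℕ} (hc : rangeLcm 1 (b - a) ∣ c) :
    (Set.Icc a b).Pairwise fun i j ↦ Nat.gcd (i + c) (j + c) = Nat.gcd i j := by
  have h_lt : ∀ i ∈ Set.Icc a b, ∀ j ∈ Set.Icc a b, i < j →
      Nat.gcd (i + c) (j + c) = Nat.gcd i j := by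
    rintro i ⟨hai, -⟩ j ⟨-, hjb⟩ hij
    have h_sub : j - i ∣ rangeLcm 1 (b - a) := dvd_rangeLcm (by omega) (by omega)
    exact gcd_add_add_right_of_sub_dvd hij.le (h_sub.trans hc)
  intro i hi j hj hij
  rcases hij.lt_or_gt with h | h
  · exact h_lt i hi j hj h
  · rw [Nat.gcd_comm, Nat.gcd_comm i]
    exact h_lt j hj i hi h

theorem prod_Icc_add_mul_rangeLcm {a b c : ℕ} (hc : rangeLcm 1 (b - a) ∣ c) :
    (∏ i ∈ Finset.Icc (a + c) (b + c), i) * rangeLcm a b =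
      (∏ i ∈ Finset.Icc a b, i) * rangeLcm (a + c) (b + c) := by
  have h_gcd : (Finset.Icc a b : Set ℕ).Pairwise fun i j ↦ gcd (i + c) (j + c) = gcd i j := by
    rw [Finset.coe_Icc]
    exact pairwise_gcd_add_eq_gcd hc
  rw [← Finset.image_add_right_Icc, Finset.prod_image (add_left_injective c).injOn,
    rangeLcm_add_add]
  exact associated_iff_eq.1 (associated_prod_mul_lcm_of_pairwise_gcd_eq (g := id) h_gcd)

theorem prod_Icc_eq_factorial_mul_choose {k n : ℕ} (hkn : k ≤ n) :
    ∏ i ∈ Finset.Icc (n - k + 1) n, i = k ! * n.choose k := by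
  obtain ⟨m, rfl⟩ := Nat.exists_eq_add_of_le' hkn
  rw [Nat.add_sub_cancel, ← Nat.ascFactorial_eq_factorial_mul_choose,
    Nat.ascFactorial_eq_prod_range, ← Finset.Ico_add_one_right_eq_Icc,
    Finset.prod_Ico_eq_prod_range, add_right_comm, Nat.add_sub_cancel_left]

theorem rangeLcm_one_dvd_rangeLcm {k n : ℕ} (hkn : k ≤ n) :
    rangeLcm 1 k ∣ rangeLcm (n - k + 1) n := by
  refine Finset.lcm_dvd fun j hj ↦ ?_
  obtain ⟨hj_pos, hj_le⟩ := Finset.mem_Icc.1 hj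
  -- The largest multiple of `j` up to `n` exceeds `n - j`, hence `n - k`.
  have h_mod : j * (n / j) + n % j = n := Nat.div_add_mod n j
  have h_lt : n % j < j := Nat.mod_lt n hj_pos
  exact (Nat.dvd_mul_right j (n / j)).trans (dvd_rangeLcm (by omega) (by omega))

theorem lcmBinom_mul_rangeLcm {k n : ℕ} (hkn : k ≤ n) :
    lcmBinom n k * rangeLcm 1 k = rangeLcm (n - k + 1) n :=
  Nat.div_mul_cancel (rangeLcm_one_dvd_rangeLcm hkn)

theorem lcmBinom_pos {k n : ℕ} (hkn : k ≤ n) : 0 < lcmBinom n k :=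
  Nat.div_pos (Nat.le_of_dvd (rangeLcm_pos (Nat.succ_pos _)) (rangeLcm_one_dvd_rangeLcm hkn))
    (rangeLcm_pos Nat.one_pos)

theorem choose_add_mul_lcmBinom {k n c : ℕ} (hkn : k ≤ n) (hc : rangeLcm 1 (k - 1) ∣ c) :
    (n + c).choose k * lcmBinom n k = n.choose k * lcmBinom (n + c) k := by
  have hkn' : k ≤ n + c := hkn.trans (Nat.le_add_right n c)
  have h_start : n + c - k + 1 = n - k + 1 + c := by omega
  have h_length : n - (n - k + 1) = k - 1 := by omega
  refine Nat.eq_of_mul_eq_mul_left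
    (Nat.mul_pos k.factorial_pos (rangeLcm_pos (b := k) Nat.one_pos)) ?_
  calc k ! * rangeLcm 1 k * ((n + c).choose k * lcmBinom n k)
    _ = (k ! * (n + c).choose k) * (lcmBinom n k * rangeLcm 1 k) := by ring
    _ = (∏ i ∈ Finset.Icc (n - k + 1 + c) (n + c), i) * rangeLcm (n - k + 1) n := by
      rw [lcmBinom_mul_rangeLcm hkn, ← prod_Icc_eq_factorial_mul_choose hkn', h_start]
    _ = (∏ i ∈ Finset.Icc (n - k + 1) n, i) * rangeLcm (n - k + 1 + c) (n + c) :=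
      prod_Icc_add_mul_rangeLcm (h_length ▸ hc)
    _ = (k ! * n.choose k) * (lcmBinom (n + c) k * rangeLcm 1 k) := by
      rw [lcmBinom_mul_rangeLcm hkn', ← prod_Icc_eq_factorial_mul_choose hkn, h_start]
    _ = k ! * rangeLcm 1 k * (n.choose k * lcmBinom (n + c) k) := by ring

/-- For `k ≥ 1`, `lcm(1, 2, …, k-1)` is a period of `n ↦ C(n, k) / [n, k]`. -/
theorem rangeLcm_period_choose_div_lcmBinom (k : ℕ) (hk : 1 ≤ k) (n : ℕ) (hn : k ≤ n) :
    (n + rangeLcm 1 (k - 1)).choose k / lcmBinom (n + rangeLcm 1 (k - 1)) k =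
      n.choose k / lcmBinom n k := by
  set c := rangeLcm 1 (k - 1)
  have h_pos : 0 < lcmBinom n k := lcmBinom_pos hn
  have h_pos' : 0 < lcmBinom (n + c) k := lcmBinom_pos (hn.trans (Nat.le_add_right n c))
  calc (n + c).choose k / lcmBinom (n + c) k
    _ = (n + c).choose k * lcmBinom n k / (lcmBinom (n + c) k * lcmBinom n k) :=
      (Nat.mul_div_mul_right _ _ h_pos).symm
    _ = n.choose k * lcmBinom (n + c) k / (lcmBinom n k * lcmBinom (n + c) k) := by
      rw [choose_add_mul_lcmBinom hn dvd_rfl, mul_comm (lcmBinom (n + c) k)]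
    _ = n.choose k / lcmBinom n k := Nat.mul_div_mul_right _ _ h_pos'
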